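/- arXiv:2104.14933 — 2 statements merged into one kernel-verified Lean document; each statement's English description precedes it below -/
import Mathlib

section
/- Let E be a Banach space, I = [a,b] ⊂ ℝ a closed interval, ϖ₁ and ϖ₂ controls on I, L ∈ (0,∞), ζ ∈ (0,1), and p ≥ ζ. Assume h ∈ C^{p-var}_{2,loc}(I;E) satisfies |δh_{sut}|_E ≤ ϖ₂(s,t)^{1/ζ} for all (s,u,t) ∈ Δ²_I with ϖ₁(s,t) ≤ L, and let 𝓘h ∈ C^{p-var}(I;E) be the unique path with (𝓘h)_a = 0 and h − δ(𝓘h) ∈ C^{ζ-var}_{2,loc}(I;E) furnished by the sewing lemma. Then for all (s,t) ∈ Δ_I, δ(𝓘h)_{st} = lim_{|𝔭|→0} Σ_{i=1}^{#𝔭−1} h_{t_i t_{i+1}}, where the limit is taken over finite partitions 𝔭 = (t_i) of [s,t] as the mesh size |𝔭| tends to zero. -/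
/-!
Write `r = h - δz` for the remainder. The second-order increments of `r` and `h` agree, and the
increments of `z` telescope, so the claim is that `∑ r (τ i) (τ (i+1)) → 0` as the mesh shrinks.

* *Young's estimate* (`young_seq`): if `‖δr‖ ≤ ϖ₂ ^ θ` with `θ = 1 / ζ > 1`, then along any chain
  from `s` to `t` the value `r s t` differs from the sum of `r` by at most `K ϖ₂(s,t) ^ θ`, with
  `K` depending only on `θ`. Each chain is split at the step where the control `ϖ₂` has been
  half used up.
* *Arbitrarily small chain sums* (`exists_small_chainSum`): on an interval where `r` has finite
  `ζ`-variation with `ζ < 1`, uniform partitions make `∑ ‖r‖` arbitrarily small. Finiteness holds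
  only on countably many closed intervals covering `[a,b]`, possibly accumulating and possibly
  degenerate. To pass to all of `[a,b]`, let `F u` be the infimum of `‖∑ r‖` over chains from `s`
  to `u`. It does not increase inside the covering intervals and has no upward jumps, so if it
  ever grew, every intermediate level would be attained at a right end point of a covering
  interval (`le_of_antitone_on_cover`): uncountably many levels, countably many end points.

Together these give `‖r s t‖ ≤ K ϖ₂(s,t) ^ θ` whenever `ϖ₁(s,t) ≤ L`, and then
`∑ ‖r‖ ≤ K (max ϖ₂) ^ (θ - 1) ϖ₂(s,t)` along any fine partition, which tends to zero with the mesh.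
-/

open Set

noncomputable section

/-- A control on the interval `[a, b]`. -/
def IsControl (ϖ : ℝ → ℝ → ℝ) (a b : ℝ) : Prop :=
  ContinuousOn (fun q : ℝ × ℝ => ϖ q.1 q.2) {q : ℝ × ℝ | a ≤ q.1 ∧ q.1 ≤ q.2 ∧ q.2 ≤ b} ∧
    (∀ s t : ℝ, a ≤ s → s ≤ t → t ≤ b → 0 ≤ ϖ s t) ∧
    (∀ s : ℝ, a ≤ s → s ≤ b → ϖ s s = 0) ∧
    (∀ s u t : ℝ, a ≤ s → s ≤ u → u ≤ t → t ≤ b → ϖ s u + ϖ u t ≤ ϖ s t)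

/-- A finite partition `a = τ 0 < τ 1 < ⋯ < τ n = b` of `[a, b]`. -/
def IsPartition {n : ℕ} (τ : Fin (n + 1) → ℝ) (a b : ℝ) : Prop :=
  StrictMono τ ∧ τ 0 = a ∧ τ (Fin.last n) = b

/-- The `p`-th power of the `p`-variation of a two-parameter map `g` on `[a, b]`. -/
def pVarPow {E : Type*} [NormedAddCommGroup E] (p : ℝ) (g : ℝ → ℝ → E) (a b : ℝ) : ENNReal :=
  ⨆ (n : ℕ) (τ : Fin (n + 1) → ℝ) (_ : IsPartition τ a b),
    ENNReal.ofReal (∑ i : Fin n, ‖g (τ i.castSucc) (τ i.succ)‖ ^ p)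

/-- Continuity of a two-parameter map on the simplex `Δ_{[a,b]}`. -/
def ContinuousOnDelta {E : Type*} [NormedAddCommGroup E] (g : ℝ → ℝ → E) (a b : ℝ) : Prop :=
  ContinuousOn (fun q : ℝ × ℝ => g q.1 q.2) {q : ℝ × ℝ | a ≤ q.1 ∧ q.1 ≤ q.2 ∧ q.2 ≤ b}

/-- `g ∈ C₂^{p-var}([a,b];E)`. -/
def MemC2Var {E : Type*} [NormedAddCommGroup E] (p : ℝ) (g : ℝ → ℝ → E) (a b : ℝ) : Prop :=
  ContinuousOnDelta g a b ∧ pVarPow p g a b < ⊤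

/-- `g ∈ C^{p-var}_{2,loc}([a,b];E)`. -/
def MemC2VarLoc {E : Type*} [NormedAddCommGroup E] (p : ℝ) (g : ℝ → ℝ → E) (a b : ℝ) : Prop :=
  ContinuousOnDelta g a b ∧
    ∃ I : ℕ → ℝ × ℝ, (⋃ k, Icc (I k).1 (I k).2) = Icc a b ∧
      ∀ k, pVarPow p g (I k).1 (I k).2 < ⊤

/-- `z ∈ C^{p-var}([a,b];E)` as a path. -/
def MemCVar {E : Type*} [NormedAddCommGroup E] (p : ℝ) (z : ℝ → E) (a b : ℝ) : Prop :=
  MemC2Var p (fun s t => z t - z s) a b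

/-! ### Elementary facts on two-parameter maps, controls and partitions -/

lemma exists_rpow_mul_lt {q M ε : ℝ} (hq : 0 < q) (hM : 0 ≤ M) (hε : 0 < ε) :
    ∃ η : ℝ, 0 < η ∧ η ^ q * M < ε := by
  have hp : 0 < ε / (M + 1) := by positivity
  refine ⟨(ε / (M + 1)) ^ q⁻¹, by positivity, ?_⟩
  rw [Real.rpow_inv_rpow hp.le hq.ne', div_mul_eq_mul_div, div_lt_iff₀ (by positivity)]
  nlinarith

/-- A continuous two-parameter map on a compact simplex that vanishes on the diagonal is uniformly
small near the diagonal. -/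
lemma small_near_diag {E : Type*} [NormedAddCommGroup E] {g : ℝ → ℝ → E} {a b : ℝ}
    (hg : ContinuousOnDelta g a b) (hd : ∀ s, a ≤ s → s ≤ b → g s s = 0)
    {ε : ℝ} (hε : 0 < ε) :
    ∃ δ : ℝ, 0 < δ ∧ ∀ s t, a ≤ s → s ≤ t → t ≤ b → t - s < δ → ‖g s t‖ < ε := by
  have hc : IsCompact {q : ℝ × ℝ | a ≤ q.1 ∧ q.1 ≤ q.2 ∧ q.2 ≤ b} := by
    refine (isCompact_Icc (a := a) (b := b)).prod (isCompact_Icc (a := a) (b := b))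
      |>.of_isClosed_subset ?_ ?_
    · exact (isClosed_le continuous_const continuous_fst).inter
        ((isClosed_le continuous_fst continuous_snd).inter
          (isClosed_le continuous_snd continuous_const))
    · rintro ⟨x, y⟩ ⟨h1, h2, h3⟩
      exact ⟨⟨h1, h2.trans h3⟩, ⟨h1.trans h2, h3⟩⟩
  have hu := hc.uniformContinuousOn_of_continuous hg
  rw [Metric.uniformContinuousOn_iff] at hu
  obtain ⟨δ, hδ, H⟩ := hu ε hε
  refine ⟨δ, hδ, fun s t h1 h2 h3 h4 => ?_⟩
  have := H (s, t) ⟨h1, h2, h3⟩ (s, s) ⟨h1, le_rfl, h2.trans h3⟩ (by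
    rw [Prod.dist_eq]
    simp only [dist_self]
    rw [max_eq_right dist_nonneg, Real.dist_eq, abs_of_nonneg (by linarith)]
    exact h4)
  simpa [hd s h1 (h2.trans h3)] using this

lemma control_sum_le {ϖ : ℝ → ℝ → ℝ} {a b : ℝ} (hϖ : IsControl ϖ a b) {x : ℕ → ℝ}
    (hx : Monotone x) (h0 : a ≤ x 0) (n : ℕ) (hn : x n ≤ b) :
    ∑ k ∈ Finset.range n, ϖ (x k) (x (k + 1)) ≤ ϖ (x 0) (x n) := by
  induction n with
  | zero => simp [hϖ.2.2.1 _ h0 hn]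
  | succ m ih =>
    rw [Finset.sum_range_succ]
    have h1 := ih ((hx (Nat.le_succ m)).trans hn)
    have h2 := hϖ.2.2.2 _ _ _ h0 (hx (Nat.zero_le m)) (hx (Nat.le_succ m)) hn
    simp only [Nat.succ_eq_add_one] at h2
    linarith

lemma IsPartition.exists_seq {n : ℕ} {τ : Fin (n + 1) → ℝ} {s t : ℝ} (hτ : IsPartition τ s t) :
    ∃ x : ℕ → ℝ, Monotone x ∧ x 0 = s ∧ x n = t ∧
      ∀ i : Fin n, τ i.castSucc = x i ∧ τ i.succ = x (i + 1) := by
  obtain ⟨hm, h0, hl⟩ := hτ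
  refine ⟨fun k => τ ⟨min k n, by omega⟩, ?_, ?_, ?_, ?_⟩
  · intro i j hij
    apply hm.monotone
    simp only [Fin.mk_le_mk]
    omega
  · simpa using h0
  · simpa [Fin.last] using hl
  · intro i
    constructor
    · congr 1
      ext
      simp only [Fin.val_castSucc]
      omega
    · congr 1
      ext
      simp only [Fin.val_succ]
      omega

lemma pVarPow_mono_left {E : Type*} [NormedAddCommGroup E] (p : ℝ) (g : ℝ → ℝ → E)
    {c u d : ℝ} (hcu : c ≤ u) : pVarPow p g u d ≤ pVarPow p g c d := by
  rcases hcu.eq_or_lt with rfl | hcu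
  · exact le_rfl
  refine iSup_le fun n => iSup_le fun τ => iSup_le fun hτ => ?_
  obtain ⟨hm, h0, hl⟩ := hτ
  have hP : IsPartition (Fin.cons c τ : Fin (n + 1 + 1) → ℝ) c d := by
    refine ⟨?_, by simp, ?_⟩
    · rw [Fin.strictMono_iff_lt_succ]
      intro i
      refine Fin.cases ?_ (fun j => ?_) i
      · simpa [h0] using hcu
      · rw [← Fin.succ_castSucc, Fin.cons_succ, Fin.cons_succ]
        exact hm Fin.castSucc_lt_succ
    · rw [← Fin.succ_last, Fin.cons_succ, hl]
  refine le_trans (ENNReal.ofReal_le_ofReal ?_)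
    (le_iSup_of_le (n + 1) (le_iSup_of_le _ (le_iSup_of_le hP le_rfl)))
  rw [Fin.sum_univ_succ]
  simp only [← Fin.succ_castSucc, Fin.cons_succ]
  exact le_add_of_nonneg_left (Real.rpow_nonneg (norm_nonneg _) _)

lemma pVarPow_mono_right {E : Type*} [NormedAddCommGroup E] (p : ℝ) (g : ℝ → ℝ → E)
    {c w d : ℝ} (hwd : w ≤ d) : pVarPow p g c w ≤ pVarPow p g c d := by
  rcases hwd.eq_or_lt with rfl | hwd
  · exact le_rfl
  refine iSup_le fun n => iSup_le fun τ => iSup_le fun hτ => ?_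
  obtain ⟨hm, h0, hl⟩ := hτ
  have hP : IsPartition (Fin.snoc τ d : Fin (n + 1 + 1) → ℝ) c d := by
    refine ⟨?_, ?_, by simp⟩
    · rw [Fin.strictMono_iff_lt_succ]
      intro i
      refine Fin.lastCases ?_ (fun j => ?_) i
      · simpa [hl] using hwd
      · rw [Fin.succ_castSucc, Fin.snoc_castSucc, Fin.snoc_castSucc]
        exact hm Fin.castSucc_lt_succ
    · rw [← Fin.castSucc_zero, Fin.snoc_castSucc, h0]
  refine le_trans (ENNReal.ofReal_le_ofReal ?_)
    (le_iSup_of_le (n + 1) (le_iSup_of_le _ (le_iSup_of_le hP le_rfl)))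
  rw [Fin.sum_univ_castSucc]
  simp only [Fin.succ_castSucc, Fin.snoc_castSucc]
  exact le_add_of_nonneg_right (Real.rpow_nonneg (norm_nonneg _) _)

/-! ### Chain sums -/

/-- `ChainSum r s t v` says that `v` is a sum `∑ r (x k) (x (k+1))` along some finite
nondecreasing chain from `s` to `t`. Repeated points are allowed, which is harmless when `r`
vanishes on the diagonal. -/
inductive ChainSum {E : Type*} [NormedAddCommGroup E] (r : ℝ → ℝ → E) (s : ℝ) : ℝ → E → Prop
  | nil : ChainSum r s s 0
  | snoc {u w : ℝ} {v : E} : ChainSum r s u v → u ≤ w → ChainSum r s w (v + r u w)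

lemma ChainSum.trans {E : Type*} [NormedAddCommGroup E] {r : ℝ → ℝ → E} {s u w : ℝ} {v v' : E}
    (h : ChainSum r s u v) (h' : ChainSum r u w v') : ChainSum r s w (v + v') := by
  induction h' with
  | nil => simpa using h
  | snoc _ hle ih => rw [← add_assoc]; exact ih.snoc hle

lemma ChainSum.of_seq {E : Type*} [NormedAddCommGroup E] (r : ℝ → ℝ → E) {x : ℕ → ℝ}
    (hx : Monotone x) (n : ℕ) :
    ChainSum r (x 0) (x n) (∑ k ∈ Finset.range n, r (x k) (x (k + 1))) := by
  induction n with
  | zero => simpa using ChainSum.nil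
  | succ m ih => rw [Finset.sum_range_succ]; exact ih.snoc (hx (Nat.le_succ m))

lemma ChainSum.exists_seq {E : Type*} [NormedAddCommGroup E] {r : ℝ → ℝ → E} {s t : ℝ} {v : E}
    (h : ChainSum r s t v) : ∃ (n : ℕ) (x : ℕ → ℝ), Monotone x ∧ x 0 = s ∧ x n = t ∧
      v = ∑ k ∈ Finset.range n, r (x k) (x (k + 1)) := by
  induction h with
  | nil => exact ⟨0, fun _ => s, monotone_const, rfl, rfl, by simp⟩
  | @snoc u w v _ hle ih =>
    obtain ⟨n, x, hx, h0, hn, hv⟩ := ih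
    refine ⟨n + 1, fun k => if k ≤ n then x k else w, ?_, by simp [h0], by simp, ?_⟩
    · intro i j hij
      dsimp only
      split_ifs with h1 h2
      · exact hx hij
      · exact (hx h1).trans (hn.le.trans hle)
      · omega
      · exact le_rfl
    · rw [Finset.sum_range_succ, hv]
      congr 1
      · refine Finset.sum_congr rfl fun k hk => ?_
        have := Finset.mem_range.1 hk
        dsimp only
        rw [if_pos (by omega), if_pos (by omega)]
      · simp [hn]

/-! ### Young's estimate -/

/-- The constant solves `2 + 2 K 2 ^ (-θ) = K`, which is what halving the control produces. -/
lemma exists_young_const {θ : ℝ} (hθ : 1 < θ) :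
    ∃ K : ℝ, 0 ≤ K ∧ ∀ w : ℝ, 0 ≤ w → 2 * w ^ θ + 2 * (K * (w / 2) ^ θ) = K * w ^ θ := by
  have h1 : (2 : ℝ) ^ (1 - θ) < 1 :=
    Real.rpow_lt_one_of_one_lt_of_neg (by norm_num) (by linarith)
  have h2 : (2 : ℝ) ^ (1 - θ) = 2 / 2 ^ θ := by
    rw [Real.rpow_sub (by norm_num), Real.rpow_one]
  have h3 : (0 : ℝ) < 2 ^ θ := by positivity
  rw [h2] at h1
  refine ⟨2 / (1 - 2 / 2 ^ θ), div_nonneg (by norm_num) (by linarith), fun w hw => ?_⟩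
  rw [Real.div_rpow hw (by norm_num)]
  have h4 : (1 : ℝ) - 2 / 2 ^ θ ≠ 0 := by linarith
  have h5 : (2 : ℝ) / (1 - 2 / 2 ^ θ) * (1 - 2 / 2 ^ θ) = 2 := div_mul_cancel₀ _ h4
  generalize (2 : ℝ) / (1 - 2 / 2 ^ θ) = K at *
  linear_combination (-w ^ θ) * h5

/-- Young's estimate along a monotone sequence: removing all intermediate points of a chain costs
at most a constant times `ϖ ^ θ`. -/
lemma young_seq {E : Type*} [NormedAddCommGroup E] {r : ℝ → ℝ → E} {ϖ : ℝ → ℝ → ℝ}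
    {a b θ K : ℝ} (hθ : 1 < θ) (hϖ : IsControl ϖ a b) (hK : 0 ≤ K)
    (hKeq : ∀ w : ℝ, 0 ≤ w → 2 * w ^ θ + 2 * (K * (w / 2) ^ θ) = K * w ^ θ)
    {x : ℕ → ℝ} (hx : Monotone x) {N : ℕ} (h0 : a ≤ x 0) (hN : x N ≤ b)
    (hδ : ∀ s u t, x 0 ≤ s → s ≤ u → u ≤ t → t ≤ x N →
      ‖r s t - r s u - r u t‖ ≤ ϖ s t ^ θ) :
    ∀ n i j : ℕ, i ≤ j → j ≤ N → j - i ≤ n →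
      ‖r (x i) (x j) - ∑ k ∈ Finset.Ico i j, r (x k) (x (k + 1))‖ ≤ K * ϖ (x i) (x j) ^ θ := by
  have ha : ∀ i, a ≤ x i := fun i => h0.trans (hx (Nat.zero_le i))
  have hb : ∀ j, j ≤ N → x j ≤ b := fun j hj => (hx hj).trans hN
  have hpos : ∀ i j, i ≤ j → j ≤ N → 0 ≤ ϖ (x i) (x j) := fun i j hij hj =>
    hϖ.2.1 _ _ (ha i) (hx hij) (hb j hj)
  have hinc : ∀ i m j, i ≤ m → m ≤ j → j ≤ N →
      ‖r (x i) (x j) - r (x i) (x m) - r (x m) (x j)‖ ≤ ϖ (x i) (x j) ^ θ := fun i m j h1 h2 h3 =>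
    hδ _ _ _ (hx (Nat.zero_le i)) (hx h1) (hx h2) (hx h3)
  have hzero : ∀ i, i ≤ N → ϖ (x i) (x i) = 0 := fun i hi => hϖ.2.2.1 _ (ha i) (hb i hi)
  have hadd : ∀ i m j, i ≤ m → m ≤ j → j ≤ N →
      ϖ (x i) (x m) + ϖ (x m) (x j) ≤ ϖ (x i) (x j) := fun i m j h1 h2 h3 =>
    hϖ.2.2.2 _ _ _ (ha i) (hx h1) (hx h2) (hb j h3)
  intro n
  induction n with
  | zero =>
    intro i j hij hj hn
    obtain rfl : i = j := by omega
    have h1 := hinc i i i le_rfl le_rfl hj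
    rw [hzero i hj, Real.zero_rpow (by linarith)] at h1
    simpa [hzero i hj, Real.zero_rpow (show θ ≠ 0 by linarith)] using h1
  | succ n ih =>
    intro i j hij hj hn
    rcases hij.eq_or_lt with rfl | hlt
    · exact ih i i le_rfl hj (by omega)
    set W := ϖ (x i) (x j) with hW
    have hW0 : 0 ≤ W := hpos i j hij hj
    -- the last step `m → m + 1` before which at most half of the control is used
    obtain ⟨m, him, hmj, hm1, hm2⟩ : ∃ m, i ≤ m ∧ m + 1 ≤ j ∧ ϖ (x i) (x m) ≤ W / 2 ∧
        ϖ (x (m + 1)) (x j) ≤ W / 2 := by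
      classical
      let P : ℕ → Prop := fun m => i ≤ m ∧ ϖ (x i) (x m) ≤ W / 2
      have hPi : P i := ⟨le_rfl, by rw [hzero i (by omega)]; linarith⟩
      have hspec : P (Nat.findGreatest P (j - 1)) :=
        Nat.findGreatest_spec (m := i) (by omega) hPi
      have hle : Nat.findGreatest P (j - 1) ≤ j - 1 := Nat.findGreatest_le _
      refine ⟨Nat.findGreatest P (j - 1), hspec.1, by omega, hspec.2, ?_⟩
      have hgt : ∀ k, Nat.findGreatest P (j - 1) < k → k ≤ j - 1 → ¬ P k := fun k h1 h2 =>
        Nat.findGreatest_is_greatest h1 h2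
      generalize Nat.findGreatest P (j - 1) = m at *
      rcases Nat.lt_or_ge (m + 1) j with h1 | h1
      · have h2 := hgt (m + 1) (by omega) (by omega)
        have h3 : W / 2 < ϖ (x i) (x (m + 1)) := by
          by_contra h4
          exact h2 ⟨by have := hspec.1; omega, not_lt.1 h4⟩
        have h5 := hadd i (m + 1) j (by have := hspec.1; omega) (by omega) hj
        linarith
      · obtain rfl : m + 1 = j := by omega
        rw [hzero _ hj]
        linarith
    have e1 := hinc i m j him (by omega) hj
    have e2 := hinc m (m + 1) j (by omega) hmj hj
    have e3 := ih i m him (by omega) (by omega)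
    have e4 := ih (m + 1) j hmj hj (by omega)
    have m2 : ϖ (x m) (x j) ^ θ ≤ W ^ θ := by
      have h1 := hadd i m j him (by omega) hj
      have h2 := hpos i m him (by omega)
      exact Real.rpow_le_rpow (hpos m j (by omega) hj) (by linarith) (by linarith)
    have m3 : K * ϖ (x i) (x m) ^ θ ≤ K * (W / 2) ^ θ :=
      mul_le_mul_of_nonneg_left
        (Real.rpow_le_rpow (hpos i m him (by omega)) hm1 (by linarith)) hK
    have m4 : K * ϖ (x (m + 1)) (x j) ^ θ ≤ K * (W / 2) ^ θ :=
      mul_le_mul_of_nonneg_left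
        (Real.rpow_le_rpow (hpos (m + 1) j hmj hj) hm2 (by linarith)) hK
    have hsum : ∑ k ∈ Finset.Ico i j, r (x k) (x (k + 1)) =
        (∑ k ∈ Finset.Ico i m, r (x k) (x (k + 1))) + r (x m) (x (m + 1)) +
          ∑ k ∈ Finset.Ico (m + 1) j, r (x k) (x (k + 1)) := by
      rw [← Finset.sum_Ico_succ_top him, Finset.sum_Ico_consecutive _ (by omega) hmj]
    have hdec : r (x i) (x j) - ∑ k ∈ Finset.Ico i j, r (x k) (x (k + 1)) =
        (r (x i) (x j) - r (x i) (x m) - r (x m) (x j)) +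
        (r (x m) (x j) - r (x m) (x (m + 1)) - r (x (m + 1)) (x j)) +
        (r (x i) (x m) - ∑ k ∈ Finset.Ico i m, r (x k) (x (k + 1))) +
        (r (x (m + 1)) (x j) - ∑ k ∈ Finset.Ico (m + 1) j, r (x k) (x (k + 1))) := by
      rw [hsum]; abel
    rw [hdec]
    have := hKeq W hW0
    refine (norm_add₄_le).trans ?_
    linarith

/-! ### Arbitrarily small chain sums -/

/-- A real function without upward jumps that does not increase inside the members of a countable
cover by closed intervals does not increase from `s` to `t`: otherwise every level strictly
between `F s` and `F t` would be the value of `F` at a right end point of the cover. -/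
lemma le_of_antitone_on_cover {F : ℝ → ℝ} {s t : ℝ} (hst : s ≤ t) {I : ℕ → ℝ × ℝ}
    (hcov : Icc s t ⊆ ⋃ k, Icc (I k).1 (I k).2)
    (hF : ∀ k, ∀ u w, s ≤ u → u ≤ w → w ≤ t → (I k).1 ≤ u → w ≤ (I k).2 → F w ≤ F u)
    (hjump : ∀ ε : ℝ, 0 < ε → ∃ δ : ℝ, 0 < δ ∧ ∀ u w, s ≤ u → u ≤ w → w ≤ t → w - u < δ →
      F w ≤ F u + ε) :
    F t ≤ F s := by
  by_contra! hlt
  have hsub : Ioo (F s) (F t) ⊆ range fun k => F (I k).2 := by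
    rintro c ⟨hc1, hc2⟩
    -- the last point at which `F` is at most `c`
    set A : Set ℝ := {u | s ≤ u ∧ u ≤ t ∧ F u ≤ c} with hA
    have hsA : s ∈ A := ⟨le_rfl, hst, hc1.le⟩
    have hbdd : BddAbove A := ⟨t, fun u hu => hu.2.1⟩
    set x := sSup A with hx
    have hsx : s ≤ x := le_csSup hbdd hsA
    have hxt : x ≤ t := csSup_le ⟨s, hsA⟩ fun u hu => hu.2.1
    have hFx : F x ≤ c := by
      refine le_of_forall_pos_le_add fun ε hε => ?_
      obtain ⟨δ, hδ, H⟩ := hjump ε hε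
      obtain ⟨u, hu, hux⟩ := exists_lt_of_lt_csSup ⟨s, hsA⟩ (show x - δ < sSup A by linarith)
      have := H u x hu.1 (le_csSup hbdd hu) hxt (by linarith)
      linarith [hu.2.2]
    have hxt' : x < t := lt_of_le_of_ne hxt (by rintro h; rw [h] at hFx; linarith)
    have hafter : ∀ w, x < w → w ≤ t → c < F w := by
      intro w h1 h2
      by_contra! h3
      exact absurd (le_csSup hbdd (show w ∈ A from ⟨hsx.trans h1.le, h2, h3⟩)) (not_le.2 h1)
    have hFx' : c ≤ F x := by
      refine le_of_forall_pos_le_add fun ε hε => ?_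
      obtain ⟨δ, hδ, H⟩ := hjump ε hε
      have h1 : x < min (x + δ / 2) t := lt_min (by linarith) hxt'
      have h2 : min (x + δ / 2) t ≤ x + δ / 2 := min_le_left _ _
      have h3 := H x _ hsx h1.le (min_le_right _ _) (by linarith)
      linarith [hafter _ h1 (min_le_right _ _)]
    obtain ⟨k, hk⟩ := mem_iUnion.1 (hcov ⟨hsx, hxt⟩)
    refine ⟨k, ?_⟩
    have hxk : x = (I k).2 := by
      by_contra hne
      have h0 : x < (I k).2 := lt_of_le_of_ne hk.2 hne
      have h1 : x < min (I k).2 t := lt_min h0 hxt'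
      have h2 := hF k x _ hsx h1.le (min_le_right _ _) hk.1 (min_le_left _ _)
      linarith [hafter _ h1 (min_le_right _ _)]
    simp only [← hxk]
    linarith
  have hcount : (Ioo (F s) (F t)).Countable := (countable_range _).mono hsub
  exact (Cardinal.Real.Ioo_countable_iff.1 hcount).not_gt hlt

/-- Finite `ζ`-variation with `ζ < 1` makes `∑ ‖r‖` over fine uniform partitions small. -/
lemma exists_small_of_pVar {E : Type*} [NormedAddCommGroup E] {r : ℝ → ℝ → E} {a b ζ : ℝ}
    (hζ0 : 0 < ζ) (hζ1 : ζ < 1) (hr : ContinuousOnDelta r a b)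
    (hd : ∀ s, a ≤ s → s ≤ b → r s s = 0) {u w : ℝ} (hau : a ≤ u) (huw : u ≤ w) (hwb : w ≤ b)
    (hvar : pVarPow ζ r u w < ⊤) {ε : ℝ} (hε : 0 < ε) :
    ∃ v, ChainSum r u w v ∧ ‖v‖ < ε := by
  rcases huw.eq_or_lt with rfl | huw
  · exact ⟨0, ChainSum.nil, by simpa⟩
  set M := (pVarPow ζ r u w).toReal with hM
  obtain ⟨η, hη, hηM⟩ := exists_rpow_mul_lt (q := 1 - ζ) (by linarith)
    (ENNReal.toReal_nonneg : 0 ≤ M) hε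
  obtain ⟨δ, hδ, H⟩ := small_near_diag hr hd hη
  obtain ⟨n, hn⟩ := exists_nat_gt ((w - u) / δ)
  have hn0 : (0 : ℝ) < n := lt_of_le_of_lt (div_nonneg (by linarith) hδ.le) hn
  set x : ℕ → ℝ := fun k => u + k * ((w - u) / n) with hx
  have hstep : 0 < (w - u) / n := div_pos (by linarith) hn0
  have hxm : StrictMono x := by
    refine strictMono_nat_of_lt_succ fun k => ?_
    simp only [hx]
    push_cast
    linarith
  have hx0 : x 0 = u := by simp [hx]
  have hxn : x n = w := by simp only [hx]; field_simp; ring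
  have hsmall : (w - u) / n < δ := by
    rw [div_lt_iff₀ hδ] at hn
    rw [div_lt_iff₀ hn0]; linarith
  have hP : IsPartition (fun i : Fin (n + 1) => x i) u w :=
    ⟨fun i j hij => hxm hij, by simpa using hx0, by simpa using hxn⟩
  have hsumζ : ∑ k ∈ Finset.range n, ‖r (x k) (x (k + 1))‖ ^ ζ ≤ M := by
    have h1 : ENNReal.ofReal (∑ i : Fin n, ‖r (x i) (x (i + 1))‖ ^ ζ) ≤ pVarPow ζ r u w := by
      refine le_trans ?_ (le_iSup_of_le n (le_iSup_of_le _ (le_iSup_of_le hP le_rfl)))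
      simp
    rw [ENNReal.ofReal_le_iff_le_toReal hvar.ne] at h1
    rwa [Fin.sum_univ_eq_sum_range (fun k => ‖r (x k) (x (k + 1))‖ ^ ζ) n] at h1
  have hch := ChainSum.of_seq r hxm.monotone n
  rw [hx0, hxn] at hch
  refine ⟨_, hch, lt_of_le_of_lt ?_ hηM⟩
  calc ‖∑ k ∈ Finset.range n, r (x k) (x (k + 1))‖
      ≤ ∑ k ∈ Finset.range n, ‖r (x k) (x (k + 1))‖ := norm_sum_le _ _
    _ ≤ ∑ k ∈ Finset.range n, η ^ (1 - ζ) * ‖r (x k) (x (k + 1))‖ ^ ζ := by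
        refine Finset.sum_le_sum fun k hk => ?_
        have hk' := Finset.mem_range.1 hk
        have h1 : a ≤ x k := by
          have := hxm.monotone (Nat.zero_le k); linarith
        have h2 : x (k + 1) ≤ b := by
          have := hxm.monotone (show k + 1 ≤ n by omega); linarith
        have h3 : ‖r (x k) (x (k + 1))‖ < η := by
          refine H _ _ h1 (hxm.monotone (Nat.le_succ k)) h2 ?_
          simp only [hx]
          push_cast
          linarith
        calc ‖r (x k) (x (k + 1))‖ = ‖r (x k) (x (k + 1))‖ ^ (1 - ζ) *
              ‖r (x k) (x (k + 1))‖ ^ ζ := by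
              rw [← Real.rpow_add_of_nonneg (norm_nonneg _) (by linarith) hζ0.le]
              simp
          _ ≤ _ := by
              gcongr
    _ = η ^ (1 - ζ) * ∑ k ∈ Finset.range n, ‖r (x k) (x (k + 1))‖ ^ ζ := by
        rw [Finset.mul_sum]
    _ ≤ _ := by gcongr

/-- Local finiteness of the `ζ`-variation suffices for arbitrarily small chain sums between any
two points. -/
lemma exists_small_chainSum {E : Type*} [NormedAddCommGroup E] {r : ℝ → ℝ → E} {a b ζ : ℝ}
    (hζ0 : 0 < ζ) (hζ1 : ζ < 1) (hr : MemC2VarLoc ζ r a b)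
    (hd : ∀ s, a ≤ s → s ≤ b → r s s = 0) {s t : ℝ} (has : a ≤ s) (hst : s ≤ t) (htb : t ≤ b)
    {ε : ℝ} (hε : 0 < ε) :
    ∃ v, ChainSum r s t v ∧ ‖v‖ < ε := by
  obtain ⟨hc, I, hcov, hI⟩ := hr
  set S : ℝ → Set ℝ := fun u => {y | ∃ v, ChainSum r s u v ∧ ‖v‖ = y} with hS
  have hne : ∀ u, s ≤ u → (S u).Nonempty := fun u hu => ⟨_, _, ChainSum.nil.snoc hu, rfl⟩
  have hbdd : ∀ u, BddBelow (S u) := fun u => ⟨0, by rintro _ ⟨v, -, rfl⟩; exact norm_nonneg v⟩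
  -- extending a chain changes the infimum by at most the size of the appended sum
  have hext : ∀ u w v', s ≤ u → ChainSum r u w v' → sInf (S w) ≤ sInf (S u) + ‖v'‖ := by
    intro u w v' hu hv'
    rw [← sub_le_iff_le_add]
    refine le_csInf (hne u hu) ?_
    rintro _ ⟨v, hv, rfl⟩
    rw [sub_le_iff_le_add]
    exact (csInf_le (hbdd w) ⟨_, hv.trans hv', rfl⟩).trans (norm_add_le _ _)
  have key : sInf (S t) ≤ sInf (S s) := by
    refine le_of_antitone_on_cover (F := fun u => sInf (S u)) (I := I) hst ?_ ?_ ?_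
    · rw [hcov]; exact Icc_subset_Icc has htb
    · intro k u w h1 h2 h3 h4 h5
      refine le_of_forall_pos_le_add fun η hη => ?_
      have hvar : pVarPow ζ r u w < ⊤ :=
        ((pVarPow_mono_left ζ r h4).trans (pVarPow_mono_right ζ r h5)).trans_lt (hI k)
      obtain ⟨v', hv', hlt⟩ := exists_small_of_pVar hζ0 hζ1 hc hd (has.trans h1) h2
        (h3.trans htb) hvar hη
      exact (hext u w v' h1 hv').trans (by linarith)
    · intro η hη
      obtain ⟨δ, hδ, H⟩ := small_near_diag hc hd hη
      refine ⟨δ, hδ, fun u w h1 h2 h3 h4 => ?_⟩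
      have hch : ChainSum r u w (r u w) := by
        simpa using (ChainSum.nil : ChainSum r u u 0).snoc h2
      exact (hext u w _ h1 hch).trans
        (by linarith [H u w (has.trans h1) h2 (h3.trans htb) h4])
  have h0 : sInf (S s) ≤ 0 := csInf_le (hbdd s) ⟨0, ChainSum.nil, norm_zero⟩
  obtain ⟨_, ⟨v, hv, rfl⟩, hlt⟩ := exists_lt_of_csInf_lt (hne t hst)
    (show sInf (S t) < ε by linarith)
  exact ⟨v, hv, hlt⟩

/-! ### Convergence of the Riemann sums -/

/-- **Riemann-sum representation of the sewing map.**  Under the hypotheses of the sewing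
lemma, if `z = 𝓘h` is the unique path with `z a = 0` and `h − δz ∈ C^{ζ-var}_{2,loc}`, then
for every `(s,t) ∈ Δ_{[a,b]}`, `δz_{st}` is the limit of the Riemann sums
`Σ_i h_{τ_i τ_{i+1}}` over partitions of `[s,t]` as the mesh tends to zero. -/
theorem sewing_riemann_sum_limit {E : Type*} [NormedAddCommGroup E] [NormedSpace ℝ E]
    [CompleteSpace E]
    (a b : ℝ) (hab : a ≤ b) (ζ p L : ℝ) (hζ0 : 0 < ζ) (hζ1 : ζ < 1) (hζp : ζ ≤ p) (hL : 0 < L)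
    (ϖ₁ ϖ₂ : ℝ → ℝ → ℝ) (hϖ₁ : IsControl ϖ₁ a b) (hϖ₂ : IsControl ϖ₂ a b)
    (h : ℝ → ℝ → E) (hh : MemC2VarLoc p h a b)
    (hδ : ∀ s u t : ℝ, a ≤ s → s ≤ u → u ≤ t → t ≤ b → ϖ₁ s t ≤ L →
      ‖h s t - h s u - h u t‖ ≤ ϖ₂ s t ^ (1 / ζ))
    (z : ℝ → E) (hz : MemCVar p z a b) (hza : z a = 0)
    (hrem : MemC2VarLoc ζ (fun s t => h s t - (z t - z s)) a b) :
    ∀ s t : ℝ, a ≤ s → s ≤ t → t ≤ b →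
      ∀ ε : ℝ, 0 < ε → ∃ δ : ℝ, 0 < δ ∧
        ∀ (n : ℕ) (τ : Fin (n + 1) → ℝ), IsPartition τ s t →
          (∀ i : Fin n, τ i.succ - τ i.castSucc < δ) →
          ‖(∑ i : Fin n, h (τ i.castSucc) (τ i.succ)) - (z t - z s)‖ < ε := by
  intro s t has hst htb ε hε
  set θ := 1 / ζ with hθdef
  have hθ : 1 < θ := by rw [hθdef, lt_div_iff₀ hζ0]; linarith
  set r : ℝ → ℝ → E := fun s t => h s t - (z t - z s) with hr
  have hδr : ∀ s u t : ℝ, a ≤ s → s ≤ u → u ≤ t → t ≤ b → ϖ₁ s t ≤ L →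
      ‖r s t - r s u - r u t‖ ≤ ϖ₂ s t ^ θ := by
    intro s u t h1 h2 h3 h4 h5
    have : r s t - r s u - r u t = h s t - h s u - h u t := by simp only [hr]; abel
    rw [this]
    exact hδ s u t h1 h2 h3 h4 h5
  have hd : ∀ s, a ≤ s → s ≤ b → r s s = 0 := by
    intro s h1 h2
    have := hδr s s s h1 le_rfl le_rfl h2 (by rw [hϖ₁.2.2.1 s h1 h2]; exact hL.le)
    rw [hϖ₂.2.2.1 s h1 h2, Real.zero_rpow (by linarith)] at this
    simpa using this
  obtain ⟨K, hK, hKeq⟩ := exists_young_const hθ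
  have hbound : ∀ u w, a ≤ u → u ≤ w → w ≤ b → ϖ₁ u w ≤ L → ‖r u w‖ ≤ K * ϖ₂ u w ^ θ := by
    intro u w h1 h2 h3 h4
    refine le_of_forall_pos_le_add fun η hη => ?_
    obtain ⟨v, hv, hlt⟩ := exists_small_chainSum hζ0 hζ1 hrem hd h1 h2 h3 hη
    obtain ⟨n, x, hx, rfl, rfl, rfl⟩ := hv.exists_seq
    have hy := young_seq (r := r) hθ hϖ₂ hK hKeq hx (N := n) h1 h3 (by
      intro s' u' t' g1 g2 g3 g4
      refine hδr s' u' t' (h1.trans g1) g2 g3 (g4.trans h3) (le_trans ?_ h4)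
      -- controls are monotone under inclusion of intervals
      have k1 := hϖ₁.2.2.2 (x 0) s' t' h1 g1 (g2.trans g3) (g4.trans h3)
      have k2 := hϖ₁.2.2.2 (x 0) t' (x n) h1 (g1.trans (g2.trans g3)) g4 h3
      have k3 := hϖ₁.2.1 (x 0) s' h1 g1 ((g2.trans g3).trans (g4.trans h3))
      have k4 := hϖ₁.2.1 t' (x n) (h1.trans (g1.trans (g2.trans g3))) g4 h3
      linarith) n 0 n (Nat.zero_le n) le_rfl (by omega)
    rw [← Finset.range_eq_Ico] at hy
    have := norm_le_norm_sub_add (r (x 0) (x n))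
      (∑ k ∈ Finset.range n, r (x k) (x (k + 1)))
    linarith
  obtain ⟨η, hη, hηε⟩ := exists_rpow_mul_lt (q := θ - 1) (M := K * ϖ₂ s t) (by linarith)
    (mul_nonneg hK (hϖ₂.2.1 s t has hst htb)) hε
  obtain ⟨δ₁, hδ₁, H₁⟩ := small_near_diag (g := ϖ₁) hϖ₁.1 hϖ₁.2.2.1 hL
  obtain ⟨δ₂, hδ₂, H₂⟩ := small_near_diag (g := ϖ₂) hϖ₂.1 hϖ₂.2.2.1 hη
  refine ⟨min δ₁ δ₂, lt_min hδ₁ hδ₂, fun n τ hτ hmesh => ?_⟩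
  obtain ⟨x, hx, hx0, hxn, hτx⟩ := hτ.exists_seq
  have e1 : ∑ i : Fin n, h (τ i.castSucc) (τ i.succ) =
      ∑ k ∈ Finset.range n, h (x k) (x (k + 1)) := by
    rw [← Fin.sum_univ_eq_sum_range (fun k => h (x k) (x (k + 1))) n]
    exact Finset.sum_congr rfl fun i _ => by rw [(hτx i).1, (hτx i).2]
  have e2 : (∑ k ∈ Finset.range n, h (x k) (x (k + 1))) - (z t - z s) =
      ∑ k ∈ Finset.range n, r (x k) (x (k + 1)) := by
    rw [Finset.sum_sub_distrib, Finset.sum_range_sub (fun k => z (x k)) n, hx0, hxn]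
  rw [e1, e2]
  refine lt_of_le_of_lt ?_ hηε
  have hsup := control_sum_le hϖ₂ hx (by rw [hx0]; exact has) n (by rw [hxn]; exact htb)
  rw [hx0, hxn] at hsup
  calc ‖∑ k ∈ Finset.range n, r (x k) (x (k + 1))‖
      ≤ ∑ k ∈ Finset.range n, ‖r (x k) (x (k + 1))‖ := norm_sum_le _ _
    _ ≤ ∑ k ∈ Finset.range n, η ^ (θ - 1) * K * ϖ₂ (x k) (x (k + 1)) := by
        refine Finset.sum_le_sum fun k hk => ?_
        have hk' := Finset.mem_range.1 hk
        have h1 : a ≤ x k := by have := hx (Nat.zero_le k); linarith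
        have h2 : x k ≤ x (k + 1) := hx (Nat.le_succ k)
        have h3 : x (k + 1) ≤ b := by have := hx (show k + 1 ≤ n by omega); linarith
        have h4 : x (k + 1) - x k < min δ₁ δ₂ := by
          have := hmesh ⟨k, hk'⟩
          rwa [(hτx ⟨k, hk'⟩).1, (hτx ⟨k, hk'⟩).2] at this
        have h5 : ϖ₁ (x k) (x (k + 1)) < L :=
          (le_abs_self _).trans_lt (H₁ _ _ h1 h2 h3 (h4.trans_le (min_le_left _ _)))
        have h6 : ϖ₂ (x k) (x (k + 1)) < η :=
          (le_abs_self _).trans_lt (H₂ _ _ h1 h2 h3 (h4.trans_le (min_le_right _ _)))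
        have h7 := hϖ₂.2.1 _ _ h1 h2 h3
        refine (hbound _ _ h1 h2 h3 h5.le).trans ?_
        have h8 : ϖ₂ (x k) (x (k + 1)) ^ θ =
            ϖ₂ (x k) (x (k + 1)) ^ (θ - 1) * ϖ₂ (x k) (x (k + 1)) := by
          conv_rhs => rw [← Real.rpow_add_one' h7 (by linarith)]
          simp
        have h9 : ϖ₂ (x k) (x (k + 1)) ^ (θ - 1) ≤ η ^ (θ - 1) :=
          Real.rpow_le_rpow h7 h6.le (by linarith)
        rw [h8, mul_comm (η ^ (θ - 1)) K, mul_assoc]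
        gcongr
    _ = η ^ (θ - 1) * K * ∑ k ∈ Finset.range n, ϖ₂ (x k) (x (k + 1)) := by
        rw [Finset.mul_sum]
    _ ≤ η ^ (θ - 1) * K * ϖ₂ s t := by gcongr
    _ = η ^ (θ - 1) * (K * ϖ₂ s t) := by ring
end
end

section
/- Let T > 0, L > 0 and p > 0. Let κ : [0,T] → [0,∞) be integrable, let ϖ be a control on [0,T], and let φ : Δ_{[0,T]} → [0,∞) satisfy φ(s,t) ≤ φ(0,T) for all (s,t) ∈ Δ_{[0,T]}. Let G : [0,T] → [0,∞) be bounded and measurable, and assume that for every (s,t) ∈ Δ_{[0,T]} with ϖ(s,t) ≤ L one has G_t − G_s ≤ φ(s,t) + ∫_s^t κ_r G_r dr + ϖ(s,t)^{1/p} · sup_{0 ≤ r ≤ t} G_r. Then there exists a constant β > 0, depending only on L and p, such that sup_{0 ≤ t ≤ T} G_t ≤ 2 · exp( β ( ∫_0^T κ_r dr + ϖ(0,T) ) ) · ( G_0 + φ(0,T) ). -/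
/-!
Fix a threshold `η ≤ L` with `η ^ (1/p) ≤ 1/8`. On an interval `[s, t]` where `∫ κ ≤ 1/8` and
`ϖ s t ≤ η`, the integral term and the control term together contribute at most a quarter of the
running supremum `sup_{[0,t]} G`, and this quarter can be absorbed on the left-hand side:
`sup_{[0,t]} G ≤ 4/3 (sup_{[0,s]} G + φ 0 T)` (`sup_step`).

To iterate, measure time with the continuous function `F t = 8 ∫_0^t κ + ϖ 0 t / η`. Superadditivity
of `ϖ` shows that `F t - F s ≤ 1` makes `[s, t]` an admissible step. By the intermediate value
theorem, each unit of `F` costs one step, i.e. at most a factor `4`, while the first step costs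
only a factor `4/3 ≤ 2` (`iterate_steps`). So `G t ≤ 2 * 4 ^ ⌊F T⌋ * (G 0 + φ 0 T)`, and
`4 ≤ exp 2` gives the claim with `β = 2 (8 + 1 / η)`.
-/


open Set MeasureTheory

noncomputable section

/-- The absorption step: on a short interval `[s, t]` a bound `B` for `G` on `[0, s]` becomes the
bound `4/3 * (B + c)` on `[0, t]`. -/
lemma sup_step {T s t c B q L : ℝ} {κ G : ℝ → ℝ} {ϖ φ : ℝ → ℝ → ℝ}
    (hκ : ∀ r ∈ Icc (0 : ℝ) T, 0 ≤ κ r) (hκi : IntegrableOn κ (Icc 0 T))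
    (hG : ∀ r ∈ Icc (0 : ℝ) T, 0 ≤ G r) (hbdd : BddAbove (G '' Icc (0 : ℝ) T))
    (hφ : ∀ s t : ℝ, 0 ≤ s → s ≤ t → t ≤ T → φ s t ≤ c) (hc : 0 ≤ c)
    (hs : 0 ≤ s) (hst : s ≤ t) (htT : t ≤ T)
    (hmain : ∀ s t : ℝ, 0 ≤ s → s ≤ t → t ≤ T → ϖ s t ≤ L →
      G t - G s ≤ φ s t + (∫ r in s..t, κ r * G r) + ϖ s t ^ q * sSup (G '' Icc 0 t))
    (hK : ∀ u ∈ Icc s t, ∫ r in s..u, κ r ≤ 1 / 8)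
    (hϖL : ∀ u ∈ Icc s t, ϖ s u ≤ L) (hϖ : ∀ u ∈ Icc s t, ϖ s u ^ q ≤ 1 / 8)
    (hB : ∀ u ∈ Icc 0 s, G u ≤ B) :
    ∀ u ∈ Icc 0 t, G u ≤ 4 / 3 * (B + c) := by
  have hbt : BddAbove (G '' Icc 0 t) := hbdd.mono (image_mono (Icc_subset_Icc_right htT))
  have hle : ∀ u ∈ Icc 0 t, G u ≤ sSup (G '' Icc 0 t) := fun u hu =>
    le_csSup hbt (mem_image_of_mem G hu)
  have hne : (G '' Icc 0 t).Nonempty := ⟨G 0, mem_image_of_mem G ⟨le_rfl, hs.trans hst⟩⟩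
  set M := sSup (G '' Icc 0 t) with hM
  have hM0 : 0 ≤ M :=
    (hG 0 ⟨le_rfl, (hs.trans hst).trans htT⟩).trans (hle 0 ⟨le_rfl, hs.trans hst⟩)
  have key : M ≤ B + c + M / 4 := by
    refine csSup_le hne ?_
    rintro _ ⟨u, hu, rfl⟩
    rcases le_total u s with hus | hsu
    · linarith [hB u ⟨hu.1, hus⟩]
    have huI : u ∈ Icc s t := ⟨hsu, hu.2⟩
    have huT : u ≤ T := hu.2.trans htT
    have h1 := hmain s u hs hsu huT (hϖL u huI)
    have h2 := hφ s u hs hsu huT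
    have h3 := hB s ⟨hs, le_rfl⟩
    have hsubset : Ioc s u ⊆ Icc 0 T := fun r hr => ⟨hs.trans hr.1.le, hr.2.trans huT⟩
    have h4 : ∫ r in s..u, κ r * G r ≤ (∫ r in s..u, κ r) * M := by
      rw [← intervalIntegral.integral_mul_const, intervalIntegral.integral_of_le hsu,
        intervalIntegral.integral_of_le hsu]
      -- this form of monotonicity does not require `κ * G` to be integrable
      refine integral_mono_of_nonneg ?_ ((hκi.mono_set hsubset).mul_const M) ?_
      · filter_upwards [ae_restrict_mem measurableSet_Ioc] with r hr
        exact mul_nonneg (hκ r (hsubset hr)) (hG r (hsubset hr))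
      · filter_upwards [ae_restrict_mem measurableSet_Ioc] with r hr
        exact mul_le_mul_of_nonneg_left (hle r ⟨hs.trans hr.1.le, hr.2.trans hu.2⟩)
          (hκ r (hsubset hr))
    have h5 : (∫ r in s..u, κ r) * M ≤ 1 / 8 * M := mul_le_mul_of_nonneg_right (hK u huI) hM0
    have h6 : sSup (G '' Icc 0 u) ≤ M :=
      csSup_le_csSup hbt ⟨G 0, mem_image_of_mem G ⟨le_rfl, hu.1⟩⟩
        (image_mono (Icc_subset_Icc_right hu.2))
    have h6' : 0 ≤ sSup (G '' Icc 0 u) :=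
      (hG u ⟨hu.1, huT⟩).trans
        (le_csSup (hbt.mono (image_mono (Icc_subset_Icc_right hu.2)))
          (mem_image_of_mem G ⟨hu.1, le_rfl⟩))
    have h7 : ϖ s u ^ q * sSup (G '' Icc 0 u) ≤ 1 / 8 * M :=
      mul_le_mul (hϖ u huI) h6 h6' (by norm_num)
    linarith
  intro u hu
  linarith [hle u hu]

/-- Iteration of a one-step estimate along a continuous clock `F` started at `0`, where every step
may use up at most one unit of the clock. -/
lemma iterate_steps {T c : ℝ} {F G : ℝ → ℝ} (hF : ContinuousOn F (Icc 0 T)) (hF0 : F 0 = 0)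
    (hc : 0 ≤ c) (hG0 : 0 ≤ G 0)
    (hstep : ∀ s t B : ℝ, 0 ≤ s → s ≤ t → t ≤ T → F t - F s ≤ 1 →
      (∀ u ∈ Icc 0 s, G u ≤ B) → ∀ u ∈ Icc 0 t, G u ≤ 4 / 3 * (B + c)) (n : ℕ) :
    ∀ t ∈ Icc 0 T, F t ≤ n + 1 → ∀ u ∈ Icc 0 t, G u ≤ 2 * 4 ^ n * (G 0 + c) := by
  induction n with
  | zero =>
    intro t ht hFt u hu
    have h := hstep 0 t (G 0) le_rfl ht.1 ht.2 (by simpa [hF0] using hFt)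
      (fun v hv => by rw [le_antisymm hv.2 hv.1]) u hu
    norm_num
    linarith
  | succ n ih =>
    intro t ht hFt u hu
    have hpow : (1 : ℝ) ≤ 4 ^ n := one_le_pow₀ (by norm_num)
    have hA : G 0 + c ≤ 4 ^ n * (G 0 + c) := le_mul_of_one_le_left (by linarith) hpow
    rw [pow_succ]
    rcases le_total (F t) (n + 1) with h | h
    · linarith [ih t ht h u hu]
    obtain ⟨s, hs, hFs⟩ : ((n : ℝ) + 1) ∈ F '' Icc 0 t :=
      intermediate_value_Icc ht.1 (hF.mono (Icc_subset_Icc_right ht.2))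
        ⟨by rw [hF0]; positivity, h⟩
    push_cast at hFt
    have h2 := hstep s t _ hs.1 hs.2 ht.2 (by linarith)
      (ih s ⟨hs.1, hs.2.trans ht.2⟩ hFs.le) u hu
    linarith

/-- **Rough Gronwall lemma.**  There is a constant `β > 0`, depending only on `L` and `p`,
such that any bounded, measurable, nonnegative `G : [0,T] → [0,∞)` satisfying
`G_t − G_s ≤ φ(s,t) + ∫_s^t κ_r G_r dr + ϖ(s,t)^{1/p} sup_{r ≤ t} G_r`
whenever `ϖ(s,t) ≤ L` obeys
`sup_{t ≤ T} G_t ≤ 2 exp(β (∫_0^T κ + ϖ(0,T))) (G_0 + φ(0,T))`. -/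
theorem rough_gronwall (L p : ℝ) (hL : 0 < L) (hp : 0 < p) :
    ∃ β : ℝ, 0 < β ∧
      ∀ (T : ℝ), 0 < T →
      ∀ (κ : ℝ → ℝ), (∀ r ∈ Icc (0 : ℝ) T, 0 ≤ κ r) → IntegrableOn κ (Icc 0 T) →
      ∀ (ϖ : ℝ → ℝ → ℝ), IsControl ϖ 0 T →
      ∀ (φ : ℝ → ℝ → ℝ),
        (∀ s t : ℝ, 0 ≤ s → s ≤ t → t ≤ T → 0 ≤ φ s t ∧ φ s t ≤ φ 0 T) →
      ∀ (G : ℝ → ℝ), Measurable G → (∀ r ∈ Icc (0 : ℝ) T, 0 ≤ G r) →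
        BddAbove (G '' Icc (0 : ℝ) T) →
        (∀ s t : ℝ, 0 ≤ s → s ≤ t → t ≤ T → ϖ s t ≤ L →
          G t - G s ≤ φ s t + (∫ r in s..t, κ r * G r) +
            ϖ s t ^ (1 / p) * sSup (G '' Icc 0 t)) →
        ∀ t ∈ Icc (0 : ℝ) T,
          G t ≤ 2 * Real.exp (β * ((∫ r in (0 : ℝ)..T, κ r) + ϖ 0 T)) * (G 0 + φ 0 T) := by
  obtain ⟨η, hη, hηL, hηp⟩ : ∃ η : ℝ, 0 < η ∧ η ≤ L ∧ η ^ (1 / p) ≤ 1 / 8 := by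
    have h8 : (0 : ℝ) < (1 / 8 : ℝ) ^ p := by positivity
    refine ⟨min L ((1 / 8 : ℝ) ^ p), lt_min hL h8, min_le_left _ _, ?_⟩
    calc (min L ((1 / 8 : ℝ) ^ p)) ^ (1 / p) ≤ ((1 / 8 : ℝ) ^ p) ^ (1 / p) :=
          Real.rpow_le_rpow (lt_min hL h8).le (min_le_right _ _) (by positivity)
      _ = 1 / 8 := by
          rw [← Real.rpow_mul (by norm_num), mul_one_div_cancel hp.ne', Real.rpow_one]
  refine ⟨2 * (8 + 1 / η), by positivity, ?_⟩
  intro T hT κ hκ hκi ϖ ⟨hcont, hpos, hdiag, hadd⟩ φ hφ G _ hG hbdd hmain t ht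
  have hII : ∀ a b : ℝ, 0 ≤ a → a ≤ b → b ≤ T → IntervalIntegrable κ volume a b :=
    fun a b ha hab hb => (intervalIntegrable_iff_integrableOn_Ioc_of_le hab).2
      (hκi.mono_set fun r hr => ⟨ha.trans hr.1.le, hr.2.trans hb⟩)
  have hInn : ∀ a b : ℝ, 0 ≤ a → a ≤ b → b ≤ T → 0 ≤ ∫ r in a..b, κ r :=
    fun a b ha hab hb => intervalIntegral.integral_nonneg hab
      fun r hr => hκ r ⟨ha.trans hr.1, hr.2.trans hb⟩
  have hIadd : ∀ a b : ℝ, 0 ≤ a → a ≤ b → b ≤ T →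
      (∫ r in (0 : ℝ)..a, κ r) + (∫ r in a..b, κ r) = ∫ r in (0 : ℝ)..b, κ r :=
    fun a b ha hab hb => intervalIntegral.integral_add_adjacent_intervals
      (hII 0 a le_rfl ha (hab.trans hb)) (hII a b ha hab hb)
  set F : ℝ → ℝ := fun t => 8 * (∫ r in (0 : ℝ)..t, κ r) + ϖ 0 t / η with hFdef
  have hFc : ContinuousOn F (Icc 0 T) := by
    have h1 : ContinuousOn (fun t => ∫ r in (0 : ℝ)..t, κ r) (Icc 0 T) := by
      have := intervalIntegral.continuousOn_primitive_interval (μ := volume) (f := κ)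
        (a := 0) (b := T) (by rwa [uIcc_of_le hT.le])
      rwa [uIcc_of_le hT.le] at this
    have h2 : ContinuousOn (fun t => ϖ 0 t) (Icc 0 T) :=
      hcont.comp (f := fun t : ℝ => ((0 : ℝ), t)) (by fun_prop)
        (fun t ht => ⟨le_rfl, ht.1, ht.2⟩)
    exact (continuousOn_const.mul h1).add (h2.div_const η)
  have hF0 : F 0 = 0 := by simp [hFdef, hdiag 0 le_rfl hT.le]
  -- increments of the clock `F` dominate both smallness parameters of a step
  have hFinc : ∀ s t : ℝ, 0 ≤ s → s ≤ t → t ≤ T →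
      8 * (∫ r in s..t, κ r) + ϖ s t / η ≤ F t - F s := by
    intro s t hs hst htT
    have h1 := hIadd s t hs hst htT
    have h2 : ϖ 0 s / η + ϖ s t / η ≤ ϖ 0 t / η := by
      rw [← add_div]
      exact div_le_div_of_nonneg_right (hadd 0 s t le_rfl hs hst htT) hη.le
    simp only [hFdef]
    linarith
  have hFmono : ∀ s t : ℝ, 0 ≤ s → s ≤ t → t ≤ T → F s ≤ F t := by
    intro s t hs hst htT
    have := hFinc s t hs hst htT
    have := hInn s t hs hst htT
    have : 0 ≤ ϖ s t / η := div_nonneg (hpos s t hs hst htT) hη.le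
    linarith
  have hc : 0 ≤ φ 0 T := (hφ 0 T le_rfl hT.le le_rfl).1
  have hG0 : 0 ≤ G 0 := hG 0 ⟨le_rfl, hT.le⟩
  have hstep : ∀ s t B : ℝ, 0 ≤ s → s ≤ t → t ≤ T → F t - F s ≤ 1 →
      (∀ u ∈ Icc 0 s, G u ≤ B) → ∀ u ∈ Icc 0 t, G u ≤ 4 / 3 * (B + φ 0 T) := by
    intro s t B hs hst htT hF1 hB
    have hsmall : ∀ u ∈ Icc s t, (∫ r in s..u, κ r) ≤ 1 / 8 ∧ ϖ s u ≤ η := by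
      intro u hu
      have h1 := hFinc s u hs hu.1 (hu.2.trans htT)
      have h2 := hFmono u t (hs.trans hu.1) hu.2 htT
      have h3 := hInn s u hs hu.1 (hu.2.trans htT)
      have h4 : 0 ≤ ϖ s u / η := div_nonneg (hpos s u hs hu.1 (hu.2.trans htT)) hη.le
      exact ⟨by linarith, (div_le_one hη).1 (by linarith)⟩
    exact sup_step hκ hκi hG hbdd (fun s t h1 h2 h3 => (hφ s t h1 h2 h3).2) hc hs hst htT hmain
      (fun u hu => (hsmall u hu).1) (fun u hu => (hsmall u hu).2.trans hηL)
      (fun u hu => (Real.rpow_le_rpow (hpos s u hs hu.1 (hu.2.trans htT)) (hsmall u hu).2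
        (by positivity)).trans hηp) hB
  have hFT : 0 ≤ F T := hF0 ▸ hFmono 0 T le_rfl hT.le le_rfl
  have hfin := iterate_steps hFc hF0 hc hG0 hstep ⌊F T⌋₊ T ⟨hT.le, le_rfl⟩
    (Nat.lt_floor_add_one _).le t ht
  have hexp : (4 : ℝ) ^ ⌊F T⌋₊
      ≤ Real.exp (2 * (8 + 1 / η) * ((∫ r in (0 : ℝ)..T, κ r) + ϖ 0 T)) := by
    have h4 : (4 : ℝ) ≤ Real.exp 2 := by
      have h1 : (2 : ℝ) ≤ Real.exp 1 := by linarith [Real.add_one_le_exp (1 : ℝ)]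
      have h2 : Real.exp 2 = Real.exp 1 * Real.exp 1 := by rw [← Real.exp_add]; norm_num
      nlinarith
    calc (4 : ℝ) ^ ⌊F T⌋₊ ≤ Real.exp 2 ^ ⌊F T⌋₊ := pow_le_pow_left₀ (by norm_num) h4 _
      _ = Real.exp (⌊F T⌋₊ * 2) := (Real.exp_nat_mul _ _).symm
      _ ≤ _ := by
        refine Real.exp_le_exp.2 ?_
        have h1 := Nat.floor_le hFT
        have h2 := hInn 0 T le_rfl hT.le le_rfl
        have h3 := hpos 0 T le_rfl hT.le le_rfl
        have h5 : 0 ≤ 1 / η * ∫ r in (0 : ℝ)..T, κ r := by positivity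
        have h6 : F T = 8 * (∫ r in (0 : ℝ)..T, κ r) + 1 / η * ϖ 0 T := by
          simp only [hFdef]; ring
        nlinarith
  refine hfin.trans ?_
  gcongr
end
end
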